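/- The generating function for plane partitions weighted by total size and the size of the main diagonal partition equals the infinite product ∏_{n≥1} 1/(1 - Q q^n)^n; that is, ∑_π q^{|π|} Q^{|π(0)|} = ∏_{n=1}^∞ (1 - Q q^n)^{-n} as formal power series in q and Q. -/

import Mathlib

/-- A plane partition: an array of non-negative integers, weakly decreasing along
rows and columns, with finite support (hence finite total size). -/
structure PlanePartition where
  part : ℕ → ℕ → ℕ
  row_antitone : ∀ i j, part (i + 1) j ≤ part i j
  col_antitone : ∀ i j, part i (j + 1) ≤ part i j
  support_finite : (Function.support fun ij : ℕ × ℕ => part ij.1 ij.2).Finite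

/-- `|π|`: the total number of cubes of the plane partition. -/
noncomputable def PlanePartition.size (π : PlanePartition) : ℕ :=
  ∑ᶠ ij : ℕ × ℕ, π.part ij.1 ij.2

/-- `|π(0)|`: the size of the main diagonal partition of a plane partition. -/
noncomputable def PlanePartition.diagSize (π : PlanePartition) : ℕ :=
  ∑ᶠ i : ℕ, π.part i i

/-!
Cut a plane partition along its diagonals. Neighbouring diagonals interlace, so a plane partition
with main diagonal `ρ` is a pair of chains `ρ ≻ p₁ ≻ p₂ ≻ ⋯`, one on each side, and the chains of
length `N` weighted by `q ^ (|p₁| + |p₂| + ⋯)` sum to the Schur function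
`s_ρ(1, q, …, q ^ (N - 1))`. The generating function is therefore the limit `N → ∞` of
`∑_ρ (Q q) ^ |ρ| * s_ρ(1, …, q ^ (N - 1)) ^ 2`, which the Cauchy identity evaluates to
`∏_{i, j < N} (1 - Q q ^ (i + j + 1))⁻¹`, and the factors with `i + j + 1 = n` give
`(1 - Q q ^ n)⁻ⁿ`.

The Cauchy identity follows from the commutation relation
`Γ₊(b) Γ₋(a) = (1 - a b)⁻¹ Γ₋(a) Γ₊(b)` of vertex operators, because `Γ₊(b)` fixes the vacuum. The
commutation relation itself is bijective: the common upper and the common lower neighbours of two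
partitions `ρ`, `σ` are both parametrised by the interval of sequences between the tail of `ρ ⊔ σ`
and `ρ ⊓ σ`, up to one free non-negative integer for the upper ones. All sums are taken in
`ℝ≥0∞`, where they may be rearranged freely.
-/

open Filter Finset Function Topology
open scoped ENNReal

section MonotoneConvergence

theorem tendsto_tsum_of_monotone {α : Type*} {f : ℕ → α → ℝ≥0∞} {g : α → ℝ≥0∞}
    (hmono : Monotone f) (hlim : ∀ a, Tendsto (f · a) atTop (𝓝 (g a))) :
    Tendsto (fun n => ∑' a, f n a) atTop (𝓝 (∑' a, g a)) := by
  let _ : MeasurableSpace α := ⊤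
  have _ : MeasurableSingletonClass α := ⟨fun _ => trivial⟩
  simp only [← MeasureTheory.lintegral_count]
  exact MeasureTheory.lintegral_tendsto_of_tendsto_of_monotone
    (fun n => measurable_from_top.aemeasurable) (.of_forall fun a _ _ h => hmono h a)
    (.of_forall hlim)

end MonotoneConvergence

section FinitelySupportedSequences

variable {M : Type*} [AddCommMonoid M]

/-- The shifted sequence `p₁, p₂, …` of a finitely supported sequence `p₀, p₁, p₂, …`. -/
noncomputable def seqTail (p : ℕ →₀ M) : ℕ →₀ M :=
  p.comapDomain Nat.succ Nat.succ_injective.injOn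

/-- The finitely supported sequence `a, p₀, p₁, …`, inverse to splitting off the first term. -/
noncomputable def seqCons (a : M) (p : ℕ →₀ M) : ℕ →₀ M :=
  Finsupp.single 0 a + p.mapDomain Nat.succ

@[simp] theorem seqTail_apply (p : ℕ →₀ M) (i : ℕ) : seqTail p i = p (i + 1) := rfl

@[simp] theorem seqCons_zero (a : M) (p : ℕ →₀ M) : seqCons a p 0 = a := by
  simp [seqCons, Finsupp.mapDomain_of_notMem_range]

@[simp] theorem seqCons_succ (a : M) (p : ℕ →₀ M) (i : ℕ) : seqCons a p (i + 1) = p i := by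
  simpa [seqCons] using Finsupp.mapDomain_apply Nat.succ_injective p i

@[simp] theorem seqTail_seqCons (a : M) (p : ℕ →₀ M) : seqTail (seqCons a p) = p := by
  ext i; simp

theorem seqCons_seqTail (p : ℕ →₀ M) : seqCons (p 0) (seqTail p) = p := by
  ext (_ | i) <;> simp

theorem degree_eq_add_degree_seqTail (p : ℕ →₀ M) : p.degree = p 0 + (seqTail p).degree := by
  conv_lhs => rw [← seqCons_seqTail p, seqCons, map_add, Finsupp.degree_single,
    Finsupp.degree_mapDomain]

theorem support_seqCons_subset_range_succ {a : M} {p : ℕ →₀ M} {N : ℕ} :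
    (seqCons a p).support ⊆ range (N + 1) ↔ p.support ⊆ range N := by
  constructor
  · intro h i hi
    simpa using @h (i + 1) (by simpa using hi)
  · rintro h (_ | i) hi
    · simp
    · simpa using h (show i ∈ p.support by simpa using hi)

end FinitelySupportedSequences

section Interlacing

/-- The relation `κ ≺ ν`, that is `ν₀ ≥ κ₀ ≥ ν₁ ≥ κ₁ ≥ …`. Partitions are modelled as finitely
supported sequences; both sequences are automatically weakly decreasing when they interlace. -/
def Interlaces (κ ν : ℕ →₀ ℕ) : Prop := ∀ i, κ i ≤ ν i ∧ ν (i + 1) ≤ κ i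

theorem Interlaces.degree_le {κ ν : ℕ →₀ ℕ} (h : Interlaces κ ν) : κ.degree ≤ ν.degree :=
  Finsupp.degree_mono fun i => (h i).1

theorem interlaces_zero_right {κ : ℕ →₀ ℕ} : Interlaces κ 0 ↔ κ = 0 := by
  refine ⟨fun h => Finsupp.ext fun i => by simpa using (h i).1, ?_⟩
  rintro rfl i
  simp

theorem add_tsub_mem_Icc {α : Type*} [AddCommMonoid α] [PartialOrder α]
    [IsOrderedCancelAddMonoid α] [Sub α] [OrderedSub α] {a b x : α} (hx : x ∈ Set.Icc a b) :
    a + b - x ∈ Set.Icc a b :=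
  ⟨le_tsub_of_add_le_left (by rw [add_comm x]; gcongr; exact hx.2),
    tsub_le_iff_left.2 (by gcongr; exact hx.1)⟩

theorem interlaces_and_interlaces_iff_mem_Icc {κ ρ σ : ℕ →₀ ℕ} :
    Interlaces κ ρ ∧ Interlaces κ σ ↔ κ ∈ Set.Icc (seqTail (ρ ⊔ σ)) (ρ ⊓ σ) := by
  simp only [Interlaces, Set.mem_Icc, Finsupp.le_def, seqTail_apply, Finsupp.sup_apply,
    sup_le_iff, le_inf_iff]
  grind

theorem interlaces_and_interlaces_iff_seqTail_mem_Icc {ν ρ σ : ℕ →₀ ℕ} :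
    Interlaces ρ ν ∧ Interlaces σ ν ↔
      (ρ ⊔ σ) 0 ≤ ν 0 ∧ seqTail ν ∈ Set.Icc (seqTail (ρ ⊔ σ)) (ρ ⊓ σ) := by
  simp only [Interlaces, Set.mem_Icc, Finsupp.le_def, seqTail_apply, Finsupp.sup_apply,
    sup_le_iff, le_inf_iff]
  exact ⟨by grind, fun _ => ⟨fun i => by cases i <;> grind, fun i => by cases i <;> grind⟩⟩

variable (ρ σ : ℕ →₀ ℕ)

/-- The local rule of the Robinson–Schensted–Knuth correspondence: it reflects the tail of `ν` in
the interval of sequences lying between the tail of `ρ ⊔ σ` and `ρ ⊓ σ`, and records by how much the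
first term of `ν` exceeds its minimum. -/
noncomputable def interlacingLocalRule :
    {ν // Interlaces ρ ν ∧ Interlaces σ ν} ≃ {κ // Interlaces κ ρ ∧ Interlaces κ σ} × ℕ where
  toFun ν := (⟨seqTail (ρ ⊔ σ) + ρ ⊓ σ - seqTail ν.1, interlaces_and_interlaces_iff_mem_Icc.2
      (add_tsub_mem_Icc (interlaces_and_interlaces_iff_seqTail_mem_Icc.1 ν.2).2)⟩,
    ν.1 0 - (ρ ⊔ σ) 0)
  invFun κt := ⟨seqCons ((ρ ⊔ σ) 0 + κt.2) (seqTail (ρ ⊔ σ) + ρ ⊓ σ - κt.1.1),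
    interlaces_and_interlaces_iff_seqTail_mem_Icc.2 ⟨by simp, by
      simpa only [seqTail_seqCons] using
        add_tsub_mem_Icc (interlaces_and_interlaces_iff_mem_Icc.1 κt.1.2)⟩⟩
  left_inv := by
    rintro ⟨ν, hν⟩
    obtain ⟨h0, -, hup⟩ := interlaces_and_interlaces_iff_seqTail_mem_Icc.1 hν
    refine Subtype.ext ?_
    dsimp only
    rw [add_tsub_cancel_of_le h0, tsub_tsub_cancel_of_le (le_add_left hup), seqCons_seqTail]
  right_inv := by
    rintro ⟨⟨κ, hκ⟩, t⟩
    obtain ⟨-, hup⟩ := interlaces_and_interlaces_iff_mem_Icc.1 hκ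
    refine Prod.ext (Subtype.ext ?_) ?_
    · dsimp only
      rw [seqTail_seqCons, tsub_tsub_cancel_of_le (le_add_left hup)]
    · simp

theorem degree_add_degree_interlacingLocalRule (ν : {ν // Interlaces ρ ν ∧ Interlaces σ ν}) :
    ν.1.degree + (interlacingLocalRule ρ σ ν).1.1.degree =
      ρ.degree + σ.degree + (interlacingLocalRule ρ σ ν).2 := by
  obtain ⟨h0, -, hup⟩ := interlaces_and_interlaces_iff_seqTail_mem_Icc.1 ν.2
  have htail : (seqTail ν.1).degree + (interlacingLocalRule ρ σ ν).1.1.degree =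
      (seqTail (ρ ⊔ σ)).degree + (ρ ⊓ σ).degree := by
    rw [← map_add, ← map_add]
    exact congrArg _ (add_tsub_cancel_of_le (le_add_left hup))
  have hhead : (ρ ⊔ σ) 0 + (interlacingLocalRule ρ σ ν).2 = ν.1 0 := add_tsub_cancel_of_le h0
  have hlattice : (ρ ⊔ σ).degree + (ρ ⊓ σ).degree = ρ.degree + σ.degree := by
    rw [← map_add, ← map_add]
    exact congrArg _ (Finsupp.ext fun i => max_add_min (ρ i) (σ i))
  rw [degree_eq_add_degree_seqTail] at hlattice ⊢
  omega

end Interlacing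

section VertexOperators

open Classical in
/-- The skew Schur function `s_{ν/κ}` evaluated at a single variable `a`. -/
noncomputable def stripWeight (a : ℝ≥0∞) (κ ν : ℕ →₀ ℕ) : ℝ≥0∞ :=
  if Interlaces κ ν then a ^ (ν.degree - κ.degree) else 0

theorem stripWeight_of_interlaces (a : ℝ≥0∞) {κ ν : ℕ →₀ ℕ} (h : Interlaces κ ν) :
    stripWeight a κ ν = a ^ (ν.degree - κ.degree) := if_pos h

theorem stripWeight_of_not_interlaces (a : ℝ≥0∞) {κ ν : ℕ →₀ ℕ} (h : ¬Interlaces κ ν) :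
    stripWeight a κ ν = 0 := if_neg h

theorem interlaces_of_stripWeight_ne_zero {a : ℝ≥0∞} {κ ν : ℕ →₀ ℕ} (h : stripWeight a κ ν ≠ 0) :
    Interlaces κ ν :=
  not_not.1 (mt (stripWeight_of_not_interlaces a) h)

theorem stripWeight_mul_left (c a : ℝ≥0∞) (κ ν : ℕ →₀ ℕ) :
    stripWeight (c * a) κ ν * c ^ κ.degree = c ^ ν.degree * stripWeight a κ ν := by
  by_cases h : Interlaces κ ν
  · rw [stripWeight_of_interlaces _ h, stripWeight_of_interlaces _ h, mul_pow, mul_right_comm,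
      ← pow_add, Nat.sub_add_cancel h.degree_le]
  · simp [stripWeight_of_not_interlaces _ h]

theorem stripWeight_mul_stripWeight_eq_interlacingLocalRule (a b : ℝ≥0∞) {ρ σ : ℕ →₀ ℕ}
    (ν : {ν // Interlaces ρ ν ∧ Interlaces σ ν}) :
    stripWeight a ρ ν * stripWeight b σ ν =
      stripWeight b (interlacingLocalRule ρ σ ν).1 ρ *
        stripWeight a (interlacingLocalRule ρ σ ν).1 σ *
          (a * b) ^ (interlacingLocalRule ρ σ ν).2 := by
  have hdeg := degree_add_degree_interlacingLocalRule ρ σ ν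
  obtain ⟨⟨⟨κ, hκρ, hκσ⟩, t⟩, hκt⟩ : ∃ κt, κt = interlacingLocalRule ρ σ ν := ⟨_, rfl⟩
  rw [← hκt] at hdeg ⊢
  obtain ⟨ν, hρν, hσν⟩ := ν
  have hρ := hκρ.degree_le
  have hσ := hκσ.degree_le
  have ha : ν.degree - ρ.degree = σ.degree - κ.degree + t := by grind
  have hb : ν.degree - σ.degree = ρ.degree - κ.degree + t := by grind
  simp only [stripWeight_of_interlaces, hρν, hσν, hκρ, hκσ, ha, hb]
  ring

theorem support_stripWeight_mul_stripWeight_subset {α : Type*} (a b : ℝ≥0∞)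
    (κ₁ κ₂ ν₁ ν₂ : α → ℕ →₀ ℕ) :
    (support fun x => stripWeight a (κ₁ x) (ν₁ x) * stripWeight b (κ₂ x) (ν₂ x)) ⊆
      {x | Interlaces (κ₁ x) (ν₁ x) ∧ Interlaces (κ₂ x) (ν₂ x)} := fun _ h =>
  ⟨interlaces_of_stripWeight_ne_zero (left_ne_zero_of_mul h),
    interlaces_of_stripWeight_ne_zero (right_ne_zero_of_mul h)⟩

theorem tsum_stripWeight_mul_stripWeight (a b : ℝ≥0∞) (ρ σ : ℕ →₀ ℕ) :
    ∑' ν, stripWeight a ρ ν * stripWeight b σ ν =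
      (1 - a * b)⁻¹ * ∑' κ, stripWeight b κ ρ * stripWeight a κ σ :=
  calc
    _ = ∑' ν : {ν // Interlaces ρ ν ∧ Interlaces σ ν}, stripWeight a ρ ν * stripWeight b σ ν :=
      (tsum_subtype_eq_of_support_subset
        (support_stripWeight_mul_stripWeight_subset a b (fun _ => ρ) (fun _ => σ) id id)).symm
    _ = ∑' κt : {κ // Interlaces κ ρ ∧ Interlaces κ σ} × ℕ,
          stripWeight b κt.1 ρ * stripWeight a κt.1 σ * (a * b) ^ κt.2 := by
      rw [← (interlacingLocalRule ρ σ).tsum_eq]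
      exact tsum_congr (stripWeight_mul_stripWeight_eq_interlacingLocalRule a b)
    _ = (∑' κ : {κ // Interlaces κ ρ ∧ Interlaces κ σ}, stripWeight b κ ρ * stripWeight a κ σ) *
          (1 - a * b)⁻¹ := by
      simp_rw [ENNReal.tsum_prod', ENNReal.tsum_mul_left, ENNReal.tsum_mul_right,
        ENNReal.tsum_geometric]
    _ = _ := by
      rw [mul_comm]
      exact congrArg _ (tsum_subtype_eq_of_support_subset
        (support_stripWeight_mul_stripWeight_subset b a id id (fun _ => ρ) (fun _ => σ)))

/-- The vertex operator `Γ₋(a)`, which adds horizontal strips to partitions. -/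
noncomputable def gammaMinus (a : ℝ≥0∞) (f : (ℕ →₀ ℕ) → ℝ≥0∞) (ν : ℕ →₀ ℕ) : ℝ≥0∞ :=
  ∑' κ, stripWeight a κ ν * f κ

/-- The vertex operator `Γ₊(b)`, which removes horizontal strips from partitions. -/
noncomputable def gammaPlus (b : ℝ≥0∞) (f : (ℕ →₀ ℕ) → ℝ≥0∞) (κ : ℕ →₀ ℕ) : ℝ≥0∞ :=
  ∑' ν, stripWeight b κ ν * f ν

theorem gammaMinus_smul (a c : ℝ≥0∞) (f : (ℕ →₀ ℕ) → ℝ≥0∞) :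
    gammaMinus a (c • f) = c • gammaMinus a f := by
  ext ν
  simp only [gammaMinus, Pi.smul_apply, smul_eq_mul, mul_left_comm _ c, ENNReal.tsum_mul_left]

theorem gammaMinus_apply_zero (a : ℝ≥0∞) (f : (ℕ →₀ ℕ) → ℝ≥0∞) : gammaMinus a f 0 = f 0 := by
  rw [gammaMinus, tsum_eq_single 0 fun κ hκ => by
    rw [stripWeight_of_not_interlaces a (mt interlaces_zero_right.1 hκ), zero_mul]]
  simp [stripWeight_of_interlaces a (interlaces_zero_right.2 rfl)]

theorem gammaPlus_single_zero (b : ℝ≥0∞) :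
    gammaPlus b (Pi.single 0 1) = Pi.single 0 1 := by
  ext κ
  rw [gammaPlus, tsum_eq_single 0 fun ν hν => by simp [hν]]
  simp [stripWeight, interlaces_zero_right, Pi.single_apply]

theorem gammaPlus_gammaMinus (a b : ℝ≥0∞) (f : (ℕ →₀ ℕ) → ℝ≥0∞) :
    gammaPlus b (gammaMinus a f) = (1 - a * b)⁻¹ • gammaMinus a (gammaPlus b f) := by
  ext σ
  calc gammaPlus b (gammaMinus a f) σ
      = ∑' ρ, (∑' ν, stripWeight a ρ ν * stripWeight b σ ν) * f ρ := by
        simp_rw [gammaPlus, gammaMinus, ← ENNReal.tsum_mul_left, ← ENNReal.tsum_mul_right]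
        rw [ENNReal.tsum_comm]
        exact tsum_congr fun ρ => tsum_congr fun ν => by ring
    _ = (1 - a * b)⁻¹ * ∑' ρ, (∑' κ, stripWeight b κ ρ * stripWeight a κ σ) * f ρ := by
        simp_rw [tsum_stripWeight_mul_stripWeight, mul_assoc, ENNReal.tsum_mul_left]
    _ = ((1 - a * b)⁻¹ • gammaMinus a (gammaPlus b f)) σ := by
        refine congrArg ((1 - a * b)⁻¹ * ·) ?_
        simp_rw [gammaMinus, gammaPlus, ← ENNReal.tsum_mul_left, ← ENNReal.tsum_mul_right]
        rw [ENNReal.tsum_comm]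
        exact tsum_congr fun κ => tsum_congr fun ρ => by ring

theorem tsum_mul_gammaMinus (a : ℝ≥0∞) (f g : (ℕ →₀ ℕ) → ℝ≥0∞) :
    ∑' ν, f ν * gammaMinus a g ν = ∑' κ, gammaPlus a f κ * g κ := by
  simp_rw [gammaPlus, gammaMinus, ← ENNReal.tsum_mul_left, ← ENNReal.tsum_mul_right]
  rw [ENNReal.tsum_comm]
  exact tsum_congr fun κ => tsum_congr fun ν => by ring

end VertexOperators

section SchurFunctions

/-- The Schur function `s_ν(a₁, …, aₙ)`, built up one variable at a time by its
branching rule. It vanishes at the sequences `ν` that are not partitions. -/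
noncomputable def schur : List ℝ≥0∞ → (ℕ →₀ ℕ) → ℝ≥0∞
  | [] => Pi.single 0 1
  | a :: as => gammaMinus a (schur as)

theorem schur_apply_zero (as : List ℝ≥0∞) : schur as 0 = 1 := by
  induction as with
  | nil => exact Pi.single_eq_same 0 1
  | cons a as ih => rw [schur, gammaMinus_apply_zero, ih]

theorem schur_map_mul_left (c : ℝ≥0∞) (as : List ℝ≥0∞) (ν : ℕ →₀ ℕ) :
    schur (as.map (c * ·)) ν = c ^ ν.degree * schur as ν := by
  induction as generalizing ν with
  | nil => by_cases h : ν = 0 <;> simp [schur, h]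
  | cons a as ih =>
    simp only [List.map_cons, schur, gammaMinus, ih, ← mul_assoc, stripWeight_mul_left,
      ← ENNReal.tsum_mul_left]

theorem gammaPlus_schur (b : ℝ≥0∞) (as : List ℝ≥0∞) :
    gammaPlus b (schur as) = (as.map fun a => (1 - a * b)⁻¹).prod • schur as := by
  induction as with
  | nil => simp [schur, gammaPlus_single_zero]
  | cons a as ih =>
    rw [schur, gammaPlus_gammaMinus, ih, gammaMinus_smul, smul_smul, List.map_cons, List.prod_cons]

theorem tsum_schur_mul_schur (as bs : List ℝ≥0∞) :
    ∑' ν, schur as ν * schur bs ν =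
      (bs.map fun b => (as.map fun a => (1 - a * b)⁻¹).prod).prod := by
  induction bs with
  | nil =>
    rw [tsum_eq_single 0 fun ν hν => by simp [schur, hν]]
    simp [schur, schur_apply_zero]
  | cons b bs ih =>
    simp_rw [schur, tsum_mul_gammaMinus, gammaPlus_schur, Pi.smul_apply, smul_eq_mul, mul_assoc,
      ENNReal.tsum_mul_left, ih, List.map_cons, List.prod_cons]

end SchurFunctions

section InterlacingChains

/-- Sequences of partitions `ρ = p₀ ≻ p₁ ≻ p₂ ≻ …` that are eventually empty. They are the sequences
of diagonals on one side of a plane partition with main diagonal `ρ`. The number of its cubes is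
`p.degree.degree`, since `p.degree` is the partition `∑ₖ pₖ`. -/
abbrev InterlacingChain (ρ : ℕ →₀ ℕ) : Type :=
  {p : ℕ →₀ ℕ →₀ ℕ // p 0 = ρ ∧ ∀ k, Interlaces (p (k + 1)) (p k)}

theorem sigma_interlacingChain_ext {x y : Σ ρ, InterlacingChain ρ × InterlacingChain ρ}
    (h₁ : x.2.1.1 = y.2.1.1) (h₂ : x.2.2.1 = y.2.2.1) : x = y := by
  obtain ⟨_, ⟨p, rfl, hp⟩, p', hp'⟩ := x
  obtain ⟨_, ⟨r, rfl, hr⟩, r', hr'⟩ := y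
  dsimp only at h₁ h₂
  subst h₁ h₂
  rfl

/-- A chain below `ρ` amounts to its second partition `κ ≺ ρ` and a chain below `κ`. -/
noncomputable def interlacingChainConsEquiv (ρ : ℕ →₀ ℕ) :
    (Σ κ : {κ // Interlaces κ ρ}, InterlacingChain κ) ≃ InterlacingChain ρ where
  toFun x := ⟨seqCons ρ x.2.1, seqCons_zero ρ x.2.1, by
    rintro (_ | k)
    · simpa [x.2.2.1] using x.1.2
    · simpa using x.2.2.2 k⟩
  invFun p := ⟨⟨p.1 1, by simpa [p.2.1] using p.2.2 0⟩, seqTail p.1, rfl, fun k => p.2.2 (k + 1)⟩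
  left_inv x := Sigma.subtype_ext
    (Subtype.ext ((seqCons_succ ρ x.2.1 0).trans x.2.2.1)) (seqTail_seqCons ρ x.2.1)
  right_inv := by
    rintro ⟨p, rfl, hp⟩
    exact Subtype.ext (seqCons_seqTail p)

/-- The weight `q ^ (|p₁| + |p₂| + ⋯)` of a chain, cut off to chains with `pₖ = 0` for `k ≥ N`. -/
noncomputable def truncatedWeight (q : ℝ≥0∞) (N : ℕ) (p : ℕ →₀ ℕ →₀ ℕ) : ℝ≥0∞ :=
  if p.support ⊆ range N then q ^ (seqTail p).degree.degree else 0

theorem truncatedWeight_mono (q : ℝ≥0∞) : Monotone (truncatedWeight q) := by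
  intro N N' hN p
  unfold truncatedWeight
  split_ifs with h h'
  · exact le_rfl
  · exact absurd (h.trans (range_mono hN)) h'
  all_goals exact zero_le

theorem eventually_truncatedWeight_eq (q : ℝ≥0∞) (p : ℕ →₀ ℕ →₀ ℕ) :
    ∀ᶠ N in atTop, truncatedWeight q N p = q ^ (seqTail p).degree.degree := by
  obtain ⟨N, hN⟩ := p.support.exists_nat_subset_range
  filter_upwards [eventually_ge_atTop N] with N' hN'
  exact if_pos (hN.trans (range_mono hN'))

theorem truncatedWeight_succ_seqCons (q : ℝ≥0∞) (N : ℕ) (ρ : ℕ →₀ ℕ) (p : ℕ →₀ ℕ →₀ ℕ) :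
    truncatedWeight q (N + 1) (seqCons ρ p) = q ^ (p 0).degree * truncatedWeight q N p := by
  simp only [truncatedWeight, support_seqCons_subset_range_succ, seqTail_seqCons]
  rw [degree_eq_add_degree_seqTail p, map_add, pow_add, mul_ite, mul_zero]

theorem tsum_truncatedWeight_zero (q : ℝ≥0∞) :
    (fun ρ => ∑' p : InterlacingChain ρ, truncatedWeight q 0 p) = Pi.single 0 1 := by
  have hweight (p : ℕ →₀ ℕ →₀ ℕ) (hp : p ≠ 0) : truncatedWeight q 0 p = 0 := by
    simp [truncatedWeight, hp]
  ext ρ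
  by_cases hρ : ρ = 0
  · subst hρ
    rw [Pi.single_eq_same, tsum_eq_single
      (⟨0, rfl, fun _ => interlaces_zero_right.2 rfl⟩ : InterlacingChain 0)
      fun p hp => hweight p fun h => hp (Subtype.ext h)]
    simp [truncatedWeight, seqTail]
  · rw [Pi.single_eq_of_ne hρ, ENNReal.tsum_eq_zero]
    rintro ⟨p, rfl, -⟩
    exact hweight p fun hp => hρ (by simp [hp])

theorem tsum_truncatedWeight_succ (q : ℝ≥0∞) (N : ℕ) (ρ : ℕ →₀ ℕ) :
    ∑' p : InterlacingChain ρ, truncatedWeight q (N + 1) p =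
      gammaMinus 1
        (fun κ => q ^ κ.degree * ∑' p : InterlacingChain κ, truncatedWeight q N p) ρ := by
  have hsupp : (support fun κ => stripWeight 1 κ ρ *
      (q ^ κ.degree * ∑' p : InterlacingChain κ, truncatedWeight q N p)) ⊆ {κ | Interlaces κ ρ} :=
    fun κ h => interlaces_of_stripWeight_ne_zero (left_ne_zero_of_mul h)
  rw [gammaMinus, ← tsum_subtype_eq_of_support_subset hsupp,
    ← (interlacingChainConsEquiv ρ).tsum_eq, ENNReal.tsum_sigma']
  refine tsum_congr fun κ => ?_
  rw [stripWeight_of_interlaces 1 κ.2, one_pow, one_mul, ← ENNReal.tsum_mul_left]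
  refine tsum_congr fun p => ?_
  rw [← congrArg Finsupp.degree p.2.1]
  exact truncatedWeight_succ_seqCons q N ρ p

theorem tsum_truncatedWeight_eq_schur (q : ℝ≥0∞) (N : ℕ) :
    (fun ρ => ∑' p : InterlacingChain ρ, truncatedWeight q N p) =
      schur ((List.range N).map (q ^ ·)) := by
  induction N with
  | zero => exact tsum_truncatedWeight_zero q
  | succ N ih =>
    -- Peeling off `ρ` multiplies the weight by `q ^ |p₁|`, which rescales the variables by `q`.
    have hgeom : (List.range (N + 1)).map (q ^ ·) =
        1 :: ((List.range N).map (q ^ ·)).map (q * ·) := by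
      simp [List.range_succ_eq_map, Function.comp_def, pow_succ']
    ext ρ
    rw [hgeom, schur, tsum_truncatedWeight_succ]
    congr 1
    ext κ
    rw [schur_map_mul_left, ← ih]

theorem tsum_pow_degree_mul_tsum_truncatedWeight (q x : ℝ≥0∞) (N : ℕ) :
    ∑' ρ : ℕ →₀ ℕ, x ^ ρ.degree * ((∑' p : InterlacingChain ρ, truncatedWeight q N p) *
        ∑' p : InterlacingChain ρ, truncatedWeight q N p) =
      ∏ ij ∈ range N ×ˢ range N, (1 - x * q ^ (ij.1 + ij.2))⁻¹ := by
  simp_rw [congrFun (tsum_truncatedWeight_eq_schur q N), ← mul_assoc, ← schur_map_mul_left,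
    tsum_schur_mul_schur, List.map_map, prod_product_right, pow_add, ← mul_assoc]
  rfl

end InterlacingChains

section Gluing

theorem finsum_eq_degree {α M : Type*} [AddCommMonoid M] (f : α →₀ M) : ∑ᶠ a, f a = f.degree :=
  finsum_eq_sum_of_support_subset _ f.fun_support_eq.subset

theorem degree_uncurry {α β M : Type*} [AddCommMonoid M] (p : α →₀ β →₀ M) :
    p.uncurry.degree = p.degree.degree := by
  rw [Finsupp.degree_apply p, map_sum]
  exact Finsupp.sum_uncurry_index p fun _ m => m

/-- The cell at position `i` of the `k`-th diagonal above the main one, for `(k, i)`. -/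
def upperCell (ki : ℕ × ℕ) : ℕ × ℕ := (ki.2, ki.2 + ki.1)

/-- The cell at position `i` of the `(k + 1)`-st diagonal below the main one, for `(k, i)`. The main
diagonal is left out, so that every cell is either an `upperCell` or a `lowerCell`. -/
def lowerCell (ki : ℕ × ℕ) : ℕ × ℕ := (ki.2 + (ki.1 + 1), ki.2)

theorem upperCell_injective : Injective upperCell := by
  rintro ⟨k, i⟩ ⟨k', i'⟩ h
  grind [upperCell]

theorem lowerCell_injective : Injective lowerCell := by
  rintro ⟨k, i⟩ ⟨k', i'⟩ h
  grind [lowerCell]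

theorem upperCell_ne_lowerCell (ki ki' : ℕ × ℕ) : upperCell ki ≠ lowerCell ki' := by
  grind [upperCell, lowerCell]

/-- The array whose diagonals above and including the main one are those of `p` and whose diagonals
below the main one are those of `p'`. -/
noncomputable def glueDiagonals (p p' : ℕ →₀ ℕ →₀ ℕ) : ℕ × ℕ →₀ ℕ :=
  p.uncurry.mapDomain upperCell + (seqTail p').uncurry.mapDomain lowerCell

theorem degree_glueDiagonals (p p' : ℕ →₀ ℕ →₀ ℕ) :
    (glueDiagonals p p').degree = p.degree.degree + (seqTail p').degree.degree := by
  simp only [glueDiagonals, map_add, Finsupp.degree_mapDomain, degree_uncurry]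

theorem glueDiagonals_upper (p p' : ℕ →₀ ℕ →₀ ℕ) (i k : ℕ) :
    glueDiagonals p p' (i, i + k) = p k i := by
  change glueDiagonals p p' (upperCell (k, i)) = _
  rw [glueDiagonals, Finsupp.add_apply, Finsupp.mapDomain_apply upperCell_injective,
    Finsupp.mapDomain_of_notMem_range, add_zero, Finsupp.uncurry_apply_pair]
  rintro ⟨ki, h⟩
  exact upperCell_ne_lowerCell _ _ h.symm

variable {p p' : ℕ →₀ ℕ →₀ ℕ}

theorem glueDiagonals_lower (h : p 0 = p' 0) (i k : ℕ) :
    glueDiagonals p p' (i + k, i) = p' k i := by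
  rcases k with _ | k
  · rw [← h]
    exact glueDiagonals_upper p p' i 0
  · change glueDiagonals p p' (lowerCell (k, i)) = _
    rw [glueDiagonals, Finsupp.add_apply, Finsupp.mapDomain_apply lowerCell_injective,
      Finsupp.mapDomain_of_notMem_range, zero_add, Finsupp.uncurry_apply_pair, seqTail_apply]
    rintro ⟨ki, h⟩
    exact upperCell_ne_lowerCell _ _ h

theorem glueDiagonals_swap (h : p 0 = p' 0) (i j : ℕ) :
    glueDiagonals p p' (i, j) = glueDiagonals p' p (j, i) := by
  rcases le_total i j with hij | hij <;> obtain ⟨k, rfl⟩ := Nat.exists_eq_add_of_le hij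
  · rw [glueDiagonals_upper, glueDiagonals_lower h.symm]
  · rw [glueDiagonals_upper, glueDiagonals_lower h]

theorem glueDiagonals_succ_le (h : p 0 = p' 0) (hp : ∀ k, Interlaces (p (k + 1)) (p k))
    (hp' : ∀ k, Interlaces (p' (k + 1)) (p' k)) (i j : ℕ) :
    glueDiagonals p p' (i, j + 1) ≤ glueDiagonals p p' (i, j) := by
  rcases Nat.lt_or_ge j i with hij | hij
  · obtain ⟨k, rfl⟩ := Nat.exists_eq_add_of_le hij
    rw [glueDiagonals_lower h, show j.succ + k = j + (k + 1) by omega, glueDiagonals_lower h]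
    exact (hp' k j).2
  · obtain ⟨k, rfl⟩ := Nat.exists_eq_add_of_le hij
    rw [add_assoc, glueDiagonals_upper, glueDiagonals_upper]
    exact (hp k i).1

end Gluing

namespace PlanePartition

/-- The array of a plane partition as a finitely supported function. -/
noncomputable def toFinsupp (π : PlanePartition) : ℕ × ℕ →₀ ℕ :=
  Finsupp.ofSupportFinite _ π.support_finite

/-- The conjugate plane partition, with rows and columns exchanged. -/
def transpose (π : PlanePartition) : PlanePartition where
  part i j := π.part j i
  row_antitone i j := π.col_antitone j i
  col_antitone i j := π.row_antitone j i
  support_finite := π.support_finite.preimage Prod.swap_injective.injOn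

/-- The sequence of the diagonals `i ↦ π i (i + k)`, indexed by `k`. -/
noncomputable def diagonals (π : PlanePartition) : ℕ →₀ ℕ →₀ ℕ :=
  (π.toFinsupp.comapDomain upperCell upperCell_injective.injOn).curry

theorem diagonals_apply (π : PlanePartition) (k i : ℕ) : π.diagonals k i = π.part i (i + k) := rfl

theorem diagonals_zero_transpose (π : PlanePartition) : π.transpose.diagonals 0 = π.diagonals 0 :=
  Finsupp.ext fun _ => rfl

theorem interlaces_diagonals (π : PlanePartition) (k : ℕ) :
    Interlaces (π.diagonals (k + 1)) (π.diagonals k) := fun i => by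
  simp only [diagonals_apply]
  refine ⟨π.col_antitone i (i + k), ?_⟩
  rw [add_right_comm, ← add_assoc]
  exact π.row_antitone i (i + k + 1)

theorem glueDiagonals_diagonals (π : PlanePartition) :
    glueDiagonals π.diagonals π.transpose.diagonals = π.toFinsupp := by
  ext ⟨i, j⟩
  rcases le_total i j with hij | hij <;> obtain ⟨k, rfl⟩ := Nat.exists_eq_add_of_le hij
  · exact glueDiagonals_upper _ _ i k
  · exact glueDiagonals_lower π.diagonals_zero_transpose.symm j k

theorem toFinsupp_injective : Injective toFinsupp := by
  rintro ⟨part, _, _, _⟩ ⟨part', _, _, _⟩ h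
  congr
  ext i j
  exact DFunLike.congr_fun h (i, j)

theorem diagSize_eq_degree (π : PlanePartition) : π.diagSize = (π.diagonals 0).degree :=
  finsum_eq_degree (π.diagonals 0)

theorem size_eq_degree_add_degree (π : PlanePartition) :
    π.size = π.diagonals.degree.degree + (seqTail π.transpose.diagonals).degree.degree := by
  rw [← degree_glueDiagonals, glueDiagonals_diagonals]
  exact finsum_eq_degree π.toFinsupp

/-- A plane partition amounts to its main diagonal `ρ` and two chains below `ρ`, read off on the two
sides of the main diagonal. -/
noncomputable def equivSigmaInterlacingChain :
    PlanePartition ≃ Σ ρ, InterlacingChain ρ × InterlacingChain ρ where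
  toFun π := ⟨π.diagonals 0, ⟨π.diagonals, rfl, π.interlaces_diagonals⟩,
    ⟨π.transpose.diagonals, π.diagonals_zero_transpose, π.transpose.interlaces_diagonals⟩⟩
  invFun x :=
    have hmain : x.2.1.1 0 = x.2.2.1 0 := x.2.1.2.1.trans x.2.2.2.1.symm
    { part := fun i j => glueDiagonals x.2.1 x.2.2 (i, j)
      row_antitone := fun i j => by
        simpa only [glueDiagonals_swap hmain] using
          glueDiagonals_succ_le hmain.symm x.2.2.2.2 x.2.1.2.2 j i
      col_antitone := glueDiagonals_succ_le hmain x.2.1.2.2 x.2.2.2.2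
      support_finite := (glueDiagonals x.2.1 x.2.2).hasFiniteSupport }
  left_inv π :=
    toFinsupp_injective (Finsupp.ext fun ij => DFunLike.congr_fun π.glueDiagonals_diagonals ij)
  right_inv := by
    rintro ⟨ρ, ⟨p, rfl, hp⟩, ⟨p', hmain, hp'⟩⟩
    refine sigma_interlacingChain_ext ?_ ?_
    · ext k i
      exact glueDiagonals_upper p p' i k
    · ext k i
      exact glueDiagonals_lower hmain.symm i k

theorem pow_size_mul_pow_diagSize (q Q : ℝ≥0∞) (π : PlanePartition) :
    q ^ π.size * Q ^ π.diagSize = (Q * q) ^ (π.diagonals 0).degree *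
      (q ^ (seqTail π.diagonals).degree.degree *
        q ^ (seqTail π.transpose.diagonals).degree.degree) := by
  rw [size_eq_degree_add_degree, diagSize_eq_degree, degree_eq_add_degree_seqTail π.diagonals,
    map_add]
  ring

theorem tendsto_prod_inv_one_sub_tsum (q Q : ℝ≥0∞) :
    Tendsto (fun N => ∏ ij ∈ range N ×ˢ range N, (1 - Q * q * q ^ (ij.1 + ij.2))⁻¹) atTop
      (𝓝 (∑' π : PlanePartition, q ^ π.size * Q ^ π.diagSize)) := by
  have htrunc (N : ℕ) : ∏ ij ∈ range N ×ˢ range N, (1 - Q * q * q ^ (ij.1 + ij.2))⁻¹ =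
      ∑' π : PlanePartition, (Q * q) ^ (π.diagonals 0).degree *
        (truncatedWeight q N π.diagonals * truncatedWeight q N π.transpose.diagonals) := by
    rw [← tsum_pow_degree_mul_tsum_truncatedWeight]
    simp_rw [← ENNReal.tsum_mul_right, ← ENNReal.tsum_mul_left, ← ENNReal.tsum_prod]
    rw [← ENNReal.tsum_sigma fun ρ (x : InterlacingChain ρ × InterlacingChain ρ) =>
      (Q * q) ^ ρ.degree * (truncatedWeight q N x.1 * truncatedWeight q N x.2)]
    exact (equivSigmaInterlacingChain.tsum_eq _).symm
  simp_rw [htrunc, pow_size_mul_pow_diagSize]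
  refine tendsto_tsum_of_monotone (fun N N' hN π => ?_) fun π => tendsto_const_nhds.congr' ?_
  · gcongr <;> exact truncatedWeight_mono q hN _
  · filter_upwards [eventually_truncatedWeight_eq q π.diagonals,
      eventually_truncatedWeight_eq q π.transpose.diagonals] with N h h'
    rw [h, h']

end PlanePartition

section EulerProduct

theorem multipliable_inv_one_sub {ι : Type*} {f : ι → ℝ} (hf : Summable f) (hlt : ∀ i, f i < 1) :
    Multipliable fun i => (1 - f i)⁻¹ := by
  refine Real.multipliable_of_summable_log (fun i => inv_pos.2 (sub_pos.2 (hlt i))) ?_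
  simpa [Real.log_inv, sub_eq_add_neg] using (Real.summable_log_one_add_of_summable hf.neg).neg

theorem ofReal_prod_inv_one_sub {ι : Type*} {f : ι → ℝ} (hnonneg : ∀ i, 0 ≤ f i)
    (hlt : ∀ i, f i < 1) (s : Finset ι) :
    ENNReal.ofReal (∏ i ∈ s, (1 - f i)⁻¹) = ∏ i ∈ s, (1 - ENNReal.ofReal (f i))⁻¹ := by
  have hpos (i : ι) : 0 < 1 - f i := sub_pos.2 (hlt i)
  rw [ENNReal.ofReal_prod_of_nonneg fun i _ => (inv_pos.2 (hpos i)).le]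
  refine prod_congr rfl fun i _ => ?_
  rw [ENNReal.ofReal_inv_of_pos (hpos i), ENNReal.ofReal_sub _ (hnonneg i), ENNReal.ofReal_one]

theorem hasProd_pow_succ_of_hasProd_add {M : Type*} [CommMonoid M] [TopologicalSpace M]
    [ContinuousMul M] [RegularSpace M] {f : ℕ → M} {a : M}
    (h : HasProd (fun ij : ℕ × ℕ => f (ij.1 + ij.2)) a) : HasProd (fun n => f n ^ (n + 1)) a := by
  refine (HasAntidiagonal.sigmaAntidiagonalEquivProd.hasProd_iff.2 h).sigma fun n => ?_
  have hconst : (fun c : antidiagonal n => f (c.1.1 + c.1.2)) = fun _ => f n :=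
    funext fun c => congrArg f (mem_antidiagonal.1 c.2)
  simpa [hconst] using hasProd_fintype fun _ : antidiagonal n => f n

theorem tendsto_range_product_range_atTop :
    Tendsto (fun N => range N ×ˢ range N) atTop atTop := by
  refine tendsto_atTop_finset_of_monotone
    (fun _ _ h => product_subset_product (range_mono h) (range_mono h)) fun ij => ?_
  exact ⟨ij.1 + ij.2 + 1, by simp only [mem_product, mem_range]; omega⟩

variable {q x : ℝ}

theorem mul_pow_lt_one (hq : q ∈ Set.Icc 0 1) (hx₀ : 0 ≤ x) (hx₁ : x < 1) (n : ℕ) :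
    x * q ^ n < 1 :=
  (mul_le_of_le_one_right hx₀ (pow_le_one₀ hq.1 hq.2)).trans_lt hx₁

theorem tendsto_prod_inv_one_sub_mul_pow_add (hq : q ∈ Set.Ico 0 1) (hx₀ : 0 ≤ x) (hx₁ : x < 1) :
    Tendsto (fun N => ∏ ij ∈ range N ×ˢ range N, (1 - x * q ^ (ij.1 + ij.2))⁻¹) atTop
      (𝓝 (∏' n : ℕ, ((1 - x * q ^ n)⁻¹) ^ (n + 1))) := by
  have hsum : Summable fun ij : ℕ × ℕ => x * q ^ (ij.1 + ij.2) := by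
    have hgeom := summable_geometric_of_lt_one hq.1 hq.2
    simpa only [pow_add] using (hgeom.mul_of_nonneg hgeom
      (fun n => pow_nonneg hq.1 n) fun n => pow_nonneg hq.1 n).mul_left x
  have hprod := (multipliable_inv_one_sub hsum fun ij =>
    mul_pow_lt_one (Set.Ico_subset_Icc_self hq) hx₀ hx₁ (ij.1 + ij.2)).hasProd
  rw [(hasProd_pow_succ_of_hasProd_add (f := fun n => (1 - x * q ^ n)⁻¹) hprod).tprod_eq]
  exact hprod.comp tendsto_range_product_range_atTop

end EulerProduct

theorem planePartition_diag_generating_function_general {q Q : ℝ} (hq : q ∈ Set.Ico 0 1)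
    (hQ : 0 ≤ Q) (hQq : Q * q < 1) :
    HasSum (fun π : PlanePartition => q ^ π.size * Q ^ π.diagSize)
      (∏' n : ℕ, ((1 - Q * q ^ (n + 1))⁻¹) ^ (n + 1)) := by
  have hQq₀ : 0 ≤ Q * q := mul_nonneg hQ hq.1
  have hlim := tendsto_prod_inv_one_sub_mul_pow_add hq hQq₀ hQq
  have hlt (n : ℕ) : Q * q * q ^ n < 1 := mul_pow_lt_one (Set.Ico_subset_Icc_self hq) hQq₀ hQq n
  have hnonneg : 0 ≤ ∏' n : ℕ, ((1 - Q * q * q ^ n)⁻¹) ^ (n + 1) :=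
    ge_of_tendsto' hlim fun N => prod_nonneg fun ij _ => (inv_pos.2 (sub_pos.2 (hlt _))).le
  have htsum : ∑' π : PlanePartition, ENNReal.ofReal q ^ π.size * ENNReal.ofReal Q ^ π.diagSize =
      ENNReal.ofReal (∏' n : ℕ, ((1 - Q * q * q ^ n)⁻¹) ^ (n + 1)) := by
    refine tendsto_nhds_unique (PlanePartition.tendsto_prod_inv_one_sub_tsum _ _) ?_
    simp_rw [← ENNReal.ofReal_mul hQ, ← ENNReal.ofReal_pow hq.1, ← ENNReal.ofReal_mul hQq₀,
      ← ofReal_prod_inv_one_sub (fun ij : ℕ × ℕ => mul_nonneg hQq₀ (pow_nonneg hq.1 (ij.1 + ij.2)))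
        fun ij => hlt (ij.1 + ij.2)]
    exact ENNReal.tendsto_ofReal hlim
  have hsum := ENNReal.hasSum_toReal (htsum.trans_ne ENNReal.ofReal_ne_top)
  rw [← ENNReal.tsum_toReal_eq fun _ => by finiteness, htsum, ENNReal.toReal_ofReal hnonneg] at hsum
  simpa only [ENNReal.toReal_mul, ENNReal.toReal_pow, ENNReal.toReal_ofReal hq.1,
    ENNReal.toReal_ofReal hQ, mul_assoc Q q, ← pow_succ'] using hsum

/-- The generating function of plane partitions weighted by total size and by the size
of the main diagonal partition equals `∏_{n ≥ 1} (1 - Q qⁿ)⁻ⁿ`. -/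
theorem planePartition_diag_generating_function (q Q : ℝ)
    (hq : q ∈ Set.Ioo (0 : ℝ) 1) (hQ : Q ∈ Set.Ioo (0 : ℝ) 1) :
    ∑' π : PlanePartition, q ^ π.size * Q ^ π.diagSize
      = ∏' n : ℕ, ((1 - Q * q ^ (n + 1))⁻¹) ^ (n + 1) :=
  (planePartition_diag_generating_function_general (Set.Ioo_subset_Ico_self hq) hQ.1.le
    (mul_lt_one_of_nonneg_of_lt_one_right hQ.2.le hq.1.le hq.2)).tsum_eq
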